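/- arXiv:1504.02374 — 2 statements merged into one kernel-verified Lean document; each statement's English description precedes it below -/
import Mathlib

section
/- Let (Ω, P) be a probability space, let N > K ≥ 1 be integers, β̂ > 0, and let X : Ω → ℝ have the Gamma distribution with integer shape N−K+1 and scale β̂. Let Y : Ω → ℝ be independent of X, with Y ≥ 0 almost surely, integrable, and E[Y] = m. Let α > 0, p > 0 and C > 0 be real constants, and set γ = α²·p·X/(α²·p·C·X + p·Y + 1). Then E[log₂(1 + γ)] ≥ log₂( 1 + 1/( C + (m + 1/p)/((N−K)·α²·β̂) ) ). -/
open MeasureTheory ProbabilityTheory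

/-! The inverse `γ⁻¹ = C + (Y + 1/p) · X⁻¹ / α²` of the signal-to-interference-plus-noise ratio is
affine in `Y` and in `X⁻¹`, so independence evaluates its mean as soon as `E[X⁻¹]` is known. Since
`z ↦ log (1 + z⁻¹)` is convex, Jensen's inequality applied to `γ⁻¹` bounds `E[log (1 + γ)]` below by
`log (1 + 1 / E[γ⁻¹])`. For a Gamma variable of shape `a` and rate `r`, the density of shape `a`
multiplied by `x⁻¹` is `r / (a - 1)` times the density of shape `a - 1`, whence
`E[X⁻¹] = r / (a - 1)`. -/

section GammaMoments

variable {a r s : ℝ}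

theorem ae_pos_gammaMeasure (a r : ℝ) : ∀ᵐ x ∂gammaMeasure a r, 0 < x := by
  have hpdf : Measurable (gammaPDF a r) := (measurable_gammaPDFReal a r).ennreal_ofReal
  rw [gammaMeasure, ae_withDensity_iff hpdf]
  filter_upwards [Measure.ae_ne volume (0 : ℝ)] with x hx hpdf_ne
  by_contra! hx_nonpos
  exact hpdf_ne (gammaPDF_of_neg (hx_nonpos.lt_of_ne hx))

theorem gammaPDFReal_mul_rpow (hr : 0 < r) (has : 0 < a + s) {x : ℝ} (hx : 0 < x) :
    gammaPDFReal a r x * x ^ s =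
      Real.Gamma (a + s) / (Real.Gamma a * r ^ s) * gammaPDFReal (a + s) r x := by
  have hΓ : Real.Gamma (a + s) ≠ 0 := (Real.Gamma_pos_of_pos has).ne'
  have hrs : r ^ s ≠ 0 := (Real.rpow_pos_of_pos hr s).ne'
  rw [gammaPDFReal, gammaPDFReal, if_pos hx.le, if_pos hx.le, Real.rpow_add hr,
    show a + s - 1 = (a - 1) + s by ring, Real.rpow_add hx]
  field_simp

theorem lintegral_rpow_gammaMeasure (ha : 0 < a) (hr : 0 < r) (has : 0 < a + s) :
    ∫⁻ x, ENNReal.ofReal (x ^ s) ∂gammaMeasure a r =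
      ENNReal.ofReal (Real.Gamma (a + s) / (Real.Gamma a * r ^ s)) := by
  have hpdf (b : ℝ) : Measurable (gammaPDF b r) := (measurable_gammaPDFReal b r).ennreal_ofReal
  have hdensity : ∀ᵐ x, (gammaPDF a r * fun x ↦ ENNReal.ofReal (x ^ s)) x =
      ENNReal.ofReal (Real.Gamma (a + s) / (Real.Gamma a * r ^ s)) * gammaPDF (a + s) r x := by
    filter_upwards [Measure.ae_ne volume (0 : ℝ)] with x hx
    rcases hx.lt_or_gt with hneg | hpos
    · simp [gammaPDF_of_neg hneg]
    · rw [Pi.mul_apply, gammaPDF, gammaPDF, ← ENNReal.ofReal_mul (gammaPDFReal_nonneg ha hr x),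
        ← ENNReal.ofReal_mul (by positivity), gammaPDFReal_mul_rpow hr has hpos]
  rw [gammaMeasure, lintegral_withDensity_eq_lintegral_mul _ (hpdf a) (by fun_prop),
    lintegral_congr_ae hdensity, lintegral_const_mul _ (hpdf (a + s)),
    lintegral_gammaPDF_eq_one has hr, mul_one]

theorem ae_rpow_nonneg_gammaMeasure (a r s : ℝ) : ∀ᵐ x ∂gammaMeasure a r, 0 ≤ x ^ s := by
  filter_upwards [ae_pos_gammaMeasure a r] with x hx using Real.rpow_nonneg hx.le s

theorem integrable_rpow_gammaMeasure (ha : 0 < a) (hr : 0 < r) (has : 0 < a + s) :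
    Integrable (fun x ↦ x ^ s) (gammaMeasure a r) := by
  rw [← lintegral_ofReal_ne_top_iff_integrable (by fun_prop) (ae_rpow_nonneg_gammaMeasure a r s),
    lintegral_rpow_gammaMeasure ha hr has]
  exact ENNReal.ofReal_ne_top

theorem integral_rpow_gammaMeasure (ha : 0 < a) (hr : 0 < r) (has : 0 < a + s) :
    ∫ x, x ^ s ∂gammaMeasure a r = Real.Gamma (a + s) / (Real.Gamma a * r ^ s) := by
  rw [integral_eq_lintegral_of_nonneg_ae (ae_rpow_nonneg_gammaMeasure a r s) (by fun_prop),
    lintegral_rpow_gammaMeasure ha hr has, ENNReal.toReal_ofReal (by positivity)]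

theorem integrable_inv_gammaMeasure (ha : 1 < a) (hr : 0 < r) :
    Integrable (fun x ↦ x⁻¹) (gammaMeasure a r) := by
  simpa only [Real.rpow_neg_one] using
    integrable_rpow_gammaMeasure (s := -1) (by linarith) hr (by linarith)

theorem integral_inv_gammaMeasure (ha : 1 < a) (hr : 0 < r) :
    ∫ x, x⁻¹ ∂gammaMeasure a r = r / (a - 1) := by
  have hmoment := integral_rpow_gammaMeasure (s := -1) (by linarith) hr (by linarith : 0 < a + -1)
  have hΓ : Real.Gamma a = (a - 1) * Real.Gamma (a - 1) := by
    simpa using Real.Gamma_add_one (sub_pos.mpr ha).ne'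
  have hΓ_ne : Real.Gamma (a - 1) ≠ 0 := (Real.Gamma_pos_of_pos (sub_pos.mpr ha)).ne'
  simp only [Real.rpow_neg_one, ← sub_eq_add_neg, hΓ] at hmoment
  rw [hmoment]
  field_simp

end GammaMoments

theorem convexOn_log_one_add_inv : ConvexOn ℝ (Set.Ioi 0) fun z : ℝ ↦ Real.log (1 + z⁻¹) := by
  have hderiv {z : ℝ} (hz : 0 < z) :
      HasDerivAt (fun z : ℝ ↦ Real.log (1 + z⁻¹)) (-(z * (z + 1))⁻¹) z := by
    convert ((hasDerivAt_inv hz.ne').const_add 1).log (by positivity) using 1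
    field_simp
  refine MonotoneOn.convexOn_of_deriv (convex_Ioi 0)
    (fun z hz ↦ (hderiv hz).continuousAt.continuousWithinAt) ?_ ?_ <;> rw [interior_Ioi]
  · exact fun z hz ↦ (hderiv hz).differentiableAt.differentiableWithinAt
  · intro x (hx : 0 < x) y (hy : 0 < y) hxy
    rw [(hderiv hx).deriv, (hderiv hy).deriv]
    gcongr

theorem log_one_add_inv_integral_le {Ω : Type*} [MeasurableSpace Ω] {μ : Measure Ω}
    [IsProbabilityMeasure μ] {Z : Ω → ℝ} {c : ℝ} (hc : 0 < c) (hcZ : ∀ᵐ ω ∂μ, c ≤ Z ω)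
    (hZ : Integrable Z μ) :
    Real.log (1 + (∫ ω, Z ω ∂μ)⁻¹) ≤ ∫ ω, Real.log (1 + (Z ω)⁻¹) ∂μ := by
  have hpos : Set.Ici c ⊆ Set.Ioi 0 := fun z hz ↦ hc.trans_le hz
  have hcont : ContinuousOn (fun z : ℝ ↦ Real.log (1 + z⁻¹)) (Set.Ici c) :=
    (convexOn_log_one_add_inv.continuousOn isOpen_Ioi).mono hpos
  have hint : Integrable (fun ω ↦ Real.log (1 + (Z ω)⁻¹)) μ := by
    refine Integrable.of_bound (C := Real.log (1 + c⁻¹)) ?_ ?_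
    · have := hZ.aemeasurable
      exact (by fun_prop : AEMeasurable _ μ).aestronglyMeasurable
    · filter_upwards [hcZ] with ω hω
      have hZω : 0 < Z ω := hpos hω
      rw [Real.norm_of_nonneg (Real.log_nonneg (by simp [hZω.le]))]
      gcongr
  exact (convexOn_log_one_add_inv.subset hpos (convex_Ici c)).map_integral_le hcont isClosed_Ici
    hcZ hZ hint

section Uplink

variable {Ω : Type*} [MeasurableSpace Ω] {P : Measure Ω} [IsProbabilityMeasure P]
  {X Y : Ω → ℝ} {α p C : ℝ}

theorem sinr_eq_inv (hα : α ≠ 0) (hp : p ≠ 0) {x : ℝ} (hx : x ≠ 0) (y C : ℝ) :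
    α ^ 2 * p * x / (α ^ 2 * p * C * x + p * y + 1) =
      (C + (y + 1 / p) * x⁻¹ / α ^ 2)⁻¹ := by
  rw [← inv_div, inv_inj]
  field_simp
  ring

theorem rate_lower_bound_general (hXpos : ∀ᵐ ω ∂P, 0 < X ω)
    (hXinv : Integrable (fun ω ↦ (X ω)⁻¹) P) (hindep : IndepFun X Y P)
    (hYnonneg : ∀ᵐ ω ∂P, 0 ≤ Y ω) (hY : Integrable Y P)
    (hα : α ≠ 0) (hp : 0 < p) (hC : 0 < C) :
    Real.logb 2 (1 + 1 / (C + (∫ ω, Y ω ∂P + 1 / p) * (∫ ω, (X ω)⁻¹ ∂P) / α ^ 2)) ≤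
      ∫ ω, Real.logb 2
        (1 + α ^ 2 * p * X ω / (α ^ 2 * p * C * X ω + p * Y ω + 1)) ∂P := by
  have hindep' : IndepFun (fun ω ↦ Y ω + 1 / p) (fun ω ↦ (X ω)⁻¹) P :=
    hindep.symm.comp (φ := (· + 1 / p)) (measurable_id.add_const _) measurable_inv
  have hYp : Integrable (fun ω ↦ Y ω + 1 / p) P := hY.add (integrable_const _)
  have hprod : Integrable (fun ω ↦ (Y ω + 1 / p) * (X ω)⁻¹ / α ^ 2) P :=
    (hindep'.integrable_mul hYp hXinv).div_const _
  have hmean : ∫ ω, C + (Y ω + 1 / p) * (X ω)⁻¹ / α ^ 2 ∂P =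
      C + (∫ ω, Y ω ∂P + 1 / p) * (∫ ω, (X ω)⁻¹ ∂P) / α ^ 2 := by
    rw [integral_add (integrable_const _) hprod, integral_div,
      hindep'.integral_fun_mul_eq_mul_integral hYp.aestronglyMeasurable hXinv.aestronglyMeasurable,
      integral_add hY (integrable_const _)]
    simp only [integral_const, probReal_univ, one_smul]
  have hC_le : ∀ᵐ ω ∂P, C ≤ C + (Y ω + 1 / p) * (X ω)⁻¹ / α ^ 2 := by
    filter_upwards [hXpos, hYnonneg] with ω hx hy
    exact le_add_of_nonneg_right (by positivity)
  have hsinr : ∀ᵐ ω ∂P, Real.log (1 + α ^ 2 * p * X ω / (α ^ 2 * p * C * X ω + p * Y ω + 1)) =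
      Real.log (1 + (C + (Y ω + 1 / p) * (X ω)⁻¹ / α ^ 2)⁻¹) := by
    filter_upwards [hXpos] with ω hx
    rw [sinr_eq_inv hα hp.ne' hx.ne']
  simp only [Real.logb, integral_div]
  rw [integral_congr_ae hsinr, ← hmean, one_div (∫ ω, _ ∂P)]
  gcongr
  exact log_one_add_inv_integral_le hC hC_le ((integrable_const C).add hprod)

theorem rate_lower_bound_of_hasLaw_gammaMeasure {a r : ℝ} (ha : 1 < a) (hr : 0 < r)
    (hX : HasLaw X (gammaMeasure a r) P) (hindep : IndepFun X Y P)
    (hYnonneg : ∀ᵐ ω ∂P, 0 ≤ Y ω) (hY : Integrable Y P)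
    (hα : α ≠ 0) (hp : 0 < p) (hC : 0 < C) :
    Real.logb 2 (1 + 1 / (C + (∫ ω, Y ω ∂P + 1 / p) * (r / (a - 1)) / α ^ 2)) ≤
      ∫ ω, Real.logb 2
        (1 + α ^ 2 * p * X ω / (α ^ 2 * p * C * X ω + p * Y ω + 1)) ∂P := by
  have hXpos : ∀ᵐ ω ∂P, 0 < X ω :=
    ae_of_ae_map hX.aemeasurable (hX.map_eq ▸ ae_pos_gammaMeasure a r)
  have hXinv : Integrable (fun ω ↦ (X ω)⁻¹) P :=
    (hX.map_eq ▸ integrable_inv_gammaMeasure ha hr).comp_aemeasurable hX.aemeasurable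
  have hXinv_mean : ∫ ω, (X ω)⁻¹ ∂P = r / (a - 1) :=
    (hX.integral_comp (f := (·⁻¹)) (by fun_prop)).trans (integral_inv_gammaMeasure ha hr)
  exact hXinv_mean ▸ rate_lower_bound_general hXpos hXinv hindep hYnonneg hY hα hp hC

end Uplink

/-- Proposition 2 of the paper: lower bound on the uplink ergodic achievable
rate. If X has the Gamma distribution with integer shape N−K+1 and scale β̂ > 0, Y is
independent of X, Y ≥ 0 a.s., integrable with E[Y] = m, and α, p, C > 0, then
E[log₂(1 + γ)] ≥ log₂(1 + 1/(C + (m + 1/p)/((N−K)·α²·β̂))) where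
γ = α²·p·X/(α²·p·C·X + p·Y + 1). -/
theorem rate_lower_bound {Ω : Type*} [MeasurableSpace Ω] (P : Measure Ω)
    [IsProbabilityMeasure P] (N K : ℕ) (hK : 1 ≤ K) (hNK : K < N) (βh : ℝ) (hβ : 0 < βh)
    (X Y : Ω → ℝ) (hXm : Measurable X) (hYm : Measurable Y)
    (hX : Measure.map X P = gammaMeasure (N - K + 1 : ℕ) (1 / βh))
    (hindep : IndepFun X Y P)
    (hYpos : ∀ᵐ ω ∂P, 0 ≤ Y ω) (hYint : Integrable Y P) (m : ℝ) (hm : ∫ ω, Y ω ∂P = m)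
    (α p C : ℝ) (hα : 0 < α) (hp : 0 < p) (hC : 0 < C) :
    ∫ ω, Real.logb 2
        (1 + α ^ 2 * p * X ω / (α ^ 2 * p * C * X ω + p * Y ω + 1)) ∂P
      ≥ Real.logb 2
        (1 + 1 / (C + (m + 1 / p) / (((N : ℝ) - K) * α ^ 2 * βh))) := by
  have hshape : (1 : ℝ) < (N - K + 1 : ℕ) := by exact_mod_cast Nat.lt_add_of_pos_left (by lia)
  have hbound := rate_lower_bound_of_hasLaw_gammaMeasure hshape (one_div_pos.mpr hβ)
    ⟨hXm.aemeasurable, hX⟩ hindep hYpos hYint hα.ne' hp hC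
  push_cast [hNK.le, add_sub_cancel_right, hm] at hbound
  convert hbound using 5
  field_simp
end

section
/- Let (Ω, P) be a probability space, let N > K ≥ 1 be integers, β̂ > 0, and let X : Ω → ℝ have the Gamma distribution with integer shape N−K+1 and scale β̂. Let Y : Ω → ℝ be independent of X, with Y ≥ 0 almost surely and integrable. Let α > 0 and C ≥ 0, and define R(p) = E[ log₂( 1 + α²·p·X/(α²·p·C·X + p·Y + 1) ) ] for p ≥ 0. Then, as p → 0 from the right, p / R(p) tends to ln 2 / ( α²·(N−K+1)·β̂ ). -/
open MeasureTheory ProbabilityTheory Filter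

/-!
The minimum energy per bit is the reciprocal of the slope of the rate at zero power. At low power
the interference and the pilot contamination only enter at second order, so pointwise
`log₂ (1 + SINR) = α² p X / ln 2 + o(p)`; since `ln (1 + z) ≤ z`, the left side is also dominated
by `α² p X / ln 2`. Dominated convergence therefore gives `R'(0⁺) = α² 𝔼[X] / ln 2`, and the law of
`X` enters only through its mean.
-/

open Set Topology

section GammaMean

variable {a r : ℝ}

lemma mul_gammaPDFReal (ha : a ≠ 0) (hr : r ≠ 0) (x : ℝ) :
    x * gammaPDFReal a r x = a / r * gammaPDFReal (a + 1) r x := by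
  unfold gammaPDFReal
  split_ifs with hx
  · rw [Real.Gamma_add_one ha, Real.rpow_add_one hr, add_sub_cancel_right]
    rcases hx.eq_or_lt with rfl | hx
    · simp [Real.zero_rpow ha]
    · rw [Real.rpow_sub_one hx.ne']
      field_simp
  · simp

lemma integral_gammaPDFReal (ha : 0 < a) (hr : 0 < r) : ∫ x, gammaPDFReal a r x = 1 := by
  rw [integral_eq_lintegral_of_nonneg_ae (ae_of_all _ (gammaPDFReal_nonneg ha hr)) (by fun_prop)]
  exact congrArg ENNReal.toReal (lintegral_gammaPDF_eq_one ha hr)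

lemma measurable_gammaPDF (a r : ℝ) : Measurable (gammaPDF a r) :=
  (measurable_gammaPDFReal a r).ennreal_ofReal

lemma integral_id_gammaMeasure (ha : 0 < a) (hr : 0 < r) : ∫ x, x ∂gammaMeasure a r = a / r :=
  calc ∫ x, x ∂gammaMeasure a r
      = ∫ x, (gammaPDF a r x).toReal • x :=
        integral_withDensity_eq_integral_toReal_smul (measurable_gammaPDF a r)
          (ae_of_all _ fun _ ↦ ENNReal.ofReal_lt_top) _
    _ = ∫ x, a / r * gammaPDFReal (a + 1) r x := by
        refine integral_congr_ae (ae_of_all _ fun x ↦ ?_)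
        simp only [gammaPDF, ENNReal.toReal_ofReal (gammaPDFReal_nonneg ha hr x), smul_eq_mul]
        rw [mul_comm, mul_gammaPDFReal ha.ne' hr.ne']
    _ = a / r := by
        rw [integral_const_mul, integral_gammaPDFReal (by positivity) hr, mul_one]

lemma integrable_id_gammaMeasure (ha : 0 < a) (hr : 0 < r) :
    Integrable (fun x ↦ x) (gammaMeasure a r) :=
  .of_integral_ne_zero <| by rw [integral_id_gammaMeasure ha hr]; positivity

lemma ae_nonneg_gammaMeasure (a r : ℝ) : ∀ᵐ x ∂gammaMeasure a r, 0 ≤ x := by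
  refine (ae_withDensity_iff (measurable_gammaPDF a r)).2 (ae_of_all _ fun x hx ↦ ?_)
  contrapose! hx
  exact gammaPDF_of_neg hx

end GammaMean

section ParametricIntegral

variable {Ω 𝕜 E : Type*} [MeasurableSpace Ω] {μ : Measure Ω} [NontriviallyNormedField 𝕜]
  [NormedAddCommGroup E] [NormedSpace ℝ E] [NormedSpace 𝕜 E] [SMulCommClass ℝ 𝕜 E]

lemma hasDerivWithinAt_integral_of_dominated {f : 𝕜 → Ω → E} {f' : Ω → E} {bound : Ω → ℝ}
    {s : Set 𝕜} {a : 𝕜} (hf_meas : ∀ᶠ p in 𝓝[s \ {a}] a, AEStronglyMeasurable (f p) μ)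
    (hf_int : Integrable (f a) μ)
    (h_bound : ∀ᶠ p in 𝓝[s \ {a}] a, ∀ᵐ ω ∂μ, ‖f p ω - f a ω‖ ≤ ‖p - a‖ * bound ω)
    (bound_integrable : Integrable bound μ)
    (h_deriv : ∀ᵐ ω ∂μ, HasDerivWithinAt (f · ω) (f' ω) s a) :
    HasDerivWithinAt (fun p ↦ ∫ ω, f p ω ∂μ) (∫ ω, f' ω ∂μ) s a := by
  simp only [hasDerivWithinAt_iff_tendsto_slope, slope_fun_def, vsub_eq_sub] at h_deriv ⊢
  have h_integral : ∀ᶠ p in 𝓝[s \ {a}] a,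
      ∫ ω, (p - a)⁻¹ • (f p ω - f a ω) ∂μ = (p - a)⁻¹ • (∫ ω, f p ω ∂μ - ∫ ω, f a ω ∂μ) := by
    filter_upwards [hf_meas, h_bound] with p hp_meas hp_bound
    have h_diff : Integrable (fun ω ↦ f p ω - f a ω) μ :=
      (bound_integrable.const_mul _).mono' (hp_meas.sub hf_int.1) hp_bound
    have hp_int : Integrable (f p) μ :=
      (h_diff.add hf_int).congr (ae_of_all _ fun _ ↦ sub_add_cancel _ _)
    rw [integral_smul, integral_sub hp_int hf_int]
  refine Tendsto.congr' h_integral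
    (tendsto_integral_filter_of_dominated_convergence bound ?_ ?_ bound_integrable h_deriv)
  · filter_upwards [hf_meas] with p hp_meas
    exact (hp_meas.sub hf_int.1).const_smul _
  · filter_upwards [h_bound, self_mem_nhdsWithin] with p hp_bound hp
    filter_upwards [hp_bound] with ω hω
    have hpa : 0 < ‖p - a‖ := norm_pos_iff.2 (sub_ne_zero.2 hp.2)
    rwa [norm_smul, norm_inv, inv_mul_le_iff₀ hpa]

end ParametricIntegral

lemma abs_logb_one_add_le {b z : ℝ} (hb : 1 < b) (hz : 0 ≤ z) :
    |Real.logb b (1 + z)| ≤ z / Real.log b := by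
  have hlogb : 0 < Real.log b := Real.log_pos hb
  rw [abs_of_nonneg (Real.logb_nonneg hb (by linarith)), Real.logb]
  gcongr
  linarith [Real.log_le_sub_one_of_pos (show 0 < 1 + z by linarith)]

/-- The signal-to-interference-plus-noise ratio after zero-forcing at transmit power `p`, for the
channel gain `x` and the interference gain `y`; `α` is the temporal correlation and `C` the pilot
contamination constant. The noise power is normalized to `1`. -/
noncomputable def sinr (α C p x y : ℝ) : ℝ :=
  α ^ 2 * p * x / (α ^ 2 * p * C * x + p * y + 1)

section Sinr

variable {α C p x y : ℝ}

@[simp]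
lemma sinr_zero_power (α C x y : ℝ) : sinr α C 0 x y = 0 := by
  simp [sinr]

lemma sinr_nonneg (hC : 0 ≤ C) (hp : 0 ≤ p) (hx : 0 ≤ x) (hy : 0 ≤ y) : 0 ≤ sinr α C p x y := by
  unfold sinr
  positivity

lemma sinr_le (hC : 0 ≤ C) (hp : 0 ≤ p) (hx : 0 ≤ x) (hy : 0 ≤ y) :
    sinr α C p x y ≤ α ^ 2 * p * x :=
  div_le_self (by positivity) (le_add_of_nonneg_left (by positivity))

lemma hasDerivAt_sinr_zero (α C x y : ℝ) : HasDerivAt (sinr α C · x y) (α ^ 2 * x) 0 := by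
  have h_num : HasDerivAt (fun p ↦ α ^ 2 * p * x) (α ^ 2 * x) 0 := by
    simpa using ((hasDerivAt_id (0 : ℝ)).const_mul (α ^ 2)).mul_const x
  have h_den : DifferentiableAt ℝ (fun p ↦ α ^ 2 * p * C * x + p * y + 1) 0 := by fun_prop
  simpa [sinr] using h_num.fun_div h_den.hasDerivAt (by simp)

lemma hasDerivAt_logb_one_add_sinr_zero (b α C x y : ℝ) :
    HasDerivAt (fun p ↦ Real.logb b (1 + sinr α C p x y)) (α ^ 2 * x / Real.log b) 0 := by
  simpa [Real.logb] using
    (((hasDerivAt_sinr_zero α C x y).const_add 1).log (by simp)).div_const (Real.log b)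

lemma abs_logb_one_add_sinr_le {b : ℝ} (hb : 1 < b) (hC : 0 ≤ C) (hp : 0 ≤ p) (hx : 0 ≤ x)
    (hy : 0 ≤ y) : |Real.logb b (1 + sinr α C p x y)| ≤ p * (α ^ 2 * x / Real.log b) := by
  have hlogb : 0 < Real.log b := Real.log_pos hb
  calc |Real.logb b (1 + sinr α C p x y)|
      ≤ sinr α C p x y / Real.log b := abs_logb_one_add_le hb (sinr_nonneg hC hp hx hy)
    _ ≤ α ^ 2 * p * x / Real.log b := by gcongr; exact sinr_le hC hp hx hy
    _ = p * (α ^ 2 * x / Real.log b) := by ring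

end Sinr

section ErgodicRate

variable {Ω : Type*} [MeasurableSpace Ω] {μ : Measure Ω} {X Y : Ω → ℝ} {α C : ℝ}

/-- The uplink ergodic rate `R(p)`, in bits per channel use, for the random channel gain `X` and the
random interference gain `Y`. -/
noncomputable def ergodicRate (μ : Measure Ω) (X Y : Ω → ℝ) (α C p : ℝ) : ℝ :=
  ∫ ω, Real.logb 2 (1 + sinr α C p (X ω) (Y ω)) ∂μ

@[simp]
lemma ergodicRate_zero_power (μ : Measure Ω) (X Y : Ω → ℝ) (α C : ℝ) :
    ergodicRate μ X Y α C 0 = 0 := by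
  simp [ergodicRate]

lemma hasDerivWithinAt_ergodicRate_zero (hX : Integrable X μ) (hX_nonneg : ∀ᵐ ω ∂μ, 0 ≤ X ω)
    (hY : AEMeasurable Y μ) (hY_nonneg : ∀ᵐ ω ∂μ, 0 ≤ Y ω) (hC : 0 ≤ C) :
    HasDerivWithinAt (ergodicRate μ X Y α C) (α ^ 2 * (∫ ω, X ω ∂μ) / Real.log 2) (Ioi 0) 0 := by
  rw [← integral_const_mul, ← integral_div]
  refine hasDerivWithinAt_integral_of_dominated (bound := fun ω ↦ α ^ 2 * X ω / Real.log 2)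
    (.of_forall fun p ↦ ?_) (by simp) ?_ ((hX.const_mul _).div_const _)
    (ae_of_all _ fun ω ↦ (hasDerivAt_logb_one_add_sinr_zero 2 α C (X ω) (Y ω)).hasDerivWithinAt)
  · have hX_meas := hX.aemeasurable
    refine AEMeasurable.aestronglyMeasurable ?_
    unfold Real.logb sinr
    fun_prop
  · filter_upwards [self_mem_nhdsWithin] with p hp
    filter_upwards [hX_nonneg, hY_nonneg] with ω hx hy
    have hp_nonneg : 0 ≤ p := le_of_lt hp.1
    simpa [abs_of_nonneg hp_nonneg] using abs_logb_one_add_sinr_le one_lt_two hC hp_nonneg hx hy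

theorem min_energy_per_bit_general (hX : Integrable X μ) (hX_nonneg : ∀ᵐ ω ∂μ, 0 ≤ X ω)
    (hX_mean : ∫ ω, X ω ∂μ ≠ 0) (hY : AEMeasurable Y μ) (hY_nonneg : ∀ᵐ ω ∂μ, 0 ≤ Y ω)
    (hα : α ≠ 0) (hC : 0 ≤ C) :
    Tendsto (fun p ↦ p / ergodicRate μ X Y α C p) (𝓝[>] 0)
      (𝓝 (Real.log 2 / (α ^ 2 * ∫ ω, X ω ∂μ))) := by
  have h_deriv := hasDerivWithinAt_ergodicRate_zero (α := α) hX hX_nonneg hY hY_nonneg hC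
  have h_slope := (hasDerivWithinAt_iff_tendsto_slope' self_notMem_Ioi).1 h_deriv
  simpa [slope_def_field] using h_slope.inv₀ (by positivity)

end ErgodicRate

/-- Let X have the Gamma distribution with integer shape N−K+1 and scale
β̂ > 0 and let Y ≥ 0 a.s. be integrable and independent of X. With α > 0 and C ≥ 0 and
R(p) = E[log₂(1 + α²·p·X/(α²·p·C·X + p·Y + 1))], as p → 0⁺ the ratio p/R(p) tends to
ln 2/(α²·(N−K+1)·β̂)  (the minimum energy per bit). -/
theorem min_energy_per_bit {Ω : Type*} [MeasurableSpace Ω] (P : Measure Ω)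
    [IsProbabilityMeasure P] (N K : ℕ) (hK : 1 ≤ K) (hNK : K < N) (βh : ℝ) (hβ : 0 < βh)
    (X Y : Ω → ℝ) (hXm : Measurable X) (hYm : Measurable Y)
    (hX : Measure.map X P = gammaMeasure (N - K + 1 : ℕ) (1 / βh))
    (hindep : IndepFun X Y P)
    (hYpos : ∀ᵐ ω ∂P, 0 ≤ Y ω) (hYint : Integrable Y P)
    (α C : ℝ) (hα : 0 < α) (hC : 0 ≤ C) :
    Tendsto
      (fun p : ℝ => p / ∫ ω, Real.logb 2
        (1 + α ^ 2 * p * X ω / (α ^ 2 * p * C * X ω + p * Y ω + 1)) ∂P)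
      (nhdsWithin 0 (Set.Ioi 0))
      (nhds (Real.log 2 / (α ^ 2 * ((N : ℝ) - K + 1) * βh))) := by
  have hlaw : HasLaw X (gammaMeasure (N - K + 1 : ℕ) (1 / βh)) P := ⟨hXm.aemeasurable, hX⟩
  have hshape : (0 : ℝ) < (N - K + 1 : ℕ) := by positivity
  have hrate : 0 < 1 / βh := by positivity
  have hmean : ∫ ω, X ω ∂P = ((N : ℝ) - K + 1) * βh := by
    rw [hlaw.integral_eq, integral_id_gammaMeasure hshape hrate, one_div, div_inv_eq_mul]
    push_cast [Nat.cast_sub hNK.le]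
    rfl
  have hXint : Integrable X P :=
    (hX ▸ integrable_id_gammaMeasure hshape hrate).comp_measurable hXm
  have hXpos : ∀ᵐ ω ∂P, 0 ≤ X ω :=
    (hlaw.ae_iff (by fun_prop)).2 (ae_nonneg_gammaMeasure _ _)
  have hmean_pos : ∫ ω, X ω ∂P ≠ 0 := by
    rw [hlaw.integral_eq, integral_id_gammaMeasure hshape hrate]
    positivity
  rw [mul_assoc, ← hmean]
  exact min_energy_per_bit_general hXint hXpos hmean_pos hYm.aemeasurable hYpos hα.ne' hC
end
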